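/- arXiv:math/0003018 — 6 statements merged into one kernel-verified Lean document; each statement's English description precedes it below -/
import Mathlib

section
/- For all nonnegative integers a, b, c, the even moment over the unit sphere is given in closed form by ∫_{U₃} x^{2a} y^{2b} z^{2c} dσ = 4π · (2a)! (2b)! (2c)! (a + b + c)! / ( (2a + 2b + 2c + 1)! · a! · b! · c! ). In particular this formula reproduces every entry of the table of moments over U₃ (e.g. ∫_{U₃} x² y² z² dσ = 4π/105). -/
open MeasureTheory

lemma aux_Gamma (k : ℕ) : Real.Gamma (k + 1 / 2) =
    (2 * k).factorial / (4 ^ k * k.factorial) * √Real.pi := by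
  induction k with
  | zero => simpa using Real.Gamma_one_half_eq
  | succ k ih =>
    have h : ((k + 1 : ℕ) : ℝ) + 1 / 2 = (k + 1 / 2) + 1 := by push_cast; ring
    rw [h, Real.Gamma_add_one (by positivity), ih]
    rw [show 2 * (k + 1) = 2 * k + 1 + 1 by ring, Nat.factorial_succ, Nat.factorial_succ,
      Nat.factorial_succ]
    push_cast
    have : (k.factorial : ℝ) ≠ 0 := by positivity
    field_simp
    ring

lemma aux_half (k : ℕ) : ∫ x in Set.Ioi (0 : ℝ), x ^ (2 * k) * Real.exp (-x ^ 2) =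
    1 / 2 * Real.Gamma (k + 1 / 2) := by
  have h := integral_rpow_mul_exp_neg_rpow (p := 2) (q := ((2 * k : ℕ) : ℝ)) (by norm_num)
    (lt_of_lt_of_le (by norm_num) (Nat.cast_nonneg _))
  have h2 : (((2 * k : ℕ) : ℝ) + 1) / 2 = k + 1 / 2 := by push_cast; ring
  rw [h2] at h
  rw [← h]
  refine setIntegral_congr_fun measurableSet_Ioi fun x hx => ?_
  simp only [Real.rpow_natCast, Real.rpow_two]

lemma aux_full (k : ℕ) : ∫ x : ℝ, x ^ (2 * k) * Real.exp (-x ^ 2) = Real.Gamma (k + 1 / 2) := by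
  have h := integral_comp_abs (f := fun x : ℝ => x ^ (2 * k) * Real.exp (-x ^ 2))
  rw [aux_half] at h
  simp only [pow_mul, sq_abs] at h ⊢
  rw [h]; ring

lemma aux_lhs (k : Fin 3 → ℕ) :
    ∫ x : EuclideanSpace ℝ (Fin 3), (∏ i, x i ^ (2 * k i)) * Real.exp (-‖x‖ ^ 2) =
      ∏ i, Real.Gamma (k i + 1 / 2) := by
  have h := (PiLp.volume_preserving_toLp (Fin 3)).integral_comp
    (MeasurableEquiv.toLp 2 (Fin 3 → ℝ)).measurableEmbedding
    (fun x : EuclideanSpace ℝ (Fin 3) => (∏ i, x i ^ (2 * k i)) * Real.exp (-‖x‖ ^ 2))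
  rw [← h]
  simp_rw [← aux_full]
  rw [← integral_fintype_prod_volume_eq_prod
    (fun (i : Fin 3) (x : ℝ) => x ^ (2 * k i) * Real.exp (-x ^ 2))]
  refine integral_congr_ae (.of_forall fun x => ?_)
  simp only [EuclideanSpace.norm_sq_eq, Finset.prod_mul_distrib, ← Real.exp_sum,
    Finset.sum_neg_distrib, Real.norm_eq_abs, sq_abs]

lemma aux_polar (k : Fin 3 → ℕ) :
    ∫ x : EuclideanSpace ℝ (Fin 3), (∏ i, x i ^ (2 * k i)) * Real.exp (-‖x‖ ^ 2) =
      (∫ v : Metric.sphere (0 : EuclideanSpace ℝ (Fin 3)) 1,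
        (∏ i, (v : EuclideanSpace ℝ (Fin 3)) i ^ (2 * k i))
        ∂((volume : Measure (EuclideanSpace ℝ (Fin 3))).toSphere)) *
      (1 / 2 * Real.Gamma ((∑ i, k i + 1 : ℕ) + 1 / 2)) := by
  set μ := (volume : Measure (EuclideanSpace ℝ (Fin 3)))
  set F : EuclideanSpace ℝ (Fin 3) → ℝ :=
    fun x => (∏ i, x i ^ (2 * k i)) * Real.exp (-‖x‖ ^ 2) with hF
  have hdim : Module.finrank ℝ (EuclideanSpace ℝ (Fin 3)) - 1 = 2 := by simp
  calc
    ∫ x, F x ∂μ = ∫ x : ({(0)}ᶜ : Set (EuclideanSpace ℝ (Fin 3))), F x.1 ∂(μ.comap (↑)) := by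
      rw [integral_subtype_comap (measurableSet_singleton _).compl fun x ↦ F x,
        restrict_compl_singleton]
    _ = ∫ p, (∏ i, (p.1 : EuclideanSpace ℝ (Fin 3)) i ^ (2 * k i)) *
          ((p.2 : ℝ) ^ (2 * ∑ i, k i) * Real.exp (-(p.2 : ℝ) ^ 2))
          ∂μ.toSphere.prod (.volumeIoiPow (Module.finrank ℝ (EuclideanSpace ℝ (Fin 3)) - 1)) := by
      rw [← μ.measurePreserving_homeomorphUnitSphereProd.integral_comp
        (Homeomorph.measurableEmbedding _)]
      refine integral_congr_ae (.of_forall fun x => ?_)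
      have hx : ‖(x : EuclideanSpace ℝ (Fin 3))‖ ≠ 0 := norm_ne_zero_iff.2 x.2
      simp only [hF, homeomorphUnitSphereProd_apply_snd_coe,
        homeomorphUnitSphereProd_apply_fst_coe, PiLp.smul_apply, smul_eq_mul, mul_pow,
        Finset.prod_mul_distrib, Finset.prod_pow_eq_pow_sum, ← Finset.mul_sum]
      rw [inv_pow]
      field_simp
    _ = (∫ v, (∏ i, (v : EuclideanSpace ℝ (Fin 3)) i ^ (2 * k i)) ∂μ.toSphere) *
        ∫ r : Set.Ioi (0 : ℝ), ((r : ℝ) ^ (2 * ∑ i, k i) * Real.exp (-(r : ℝ) ^ 2))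
          ∂.volumeIoiPow (Module.finrank ℝ (EuclideanSpace ℝ (Fin 3)) - 1) :=
      integral_prod_mul
        (fun v : Metric.sphere (0 : EuclideanSpace ℝ (Fin 3)) 1 =>
          (∏ i, (v : EuclideanSpace ℝ (Fin 3)) i ^ (2 * k i)))
        (fun r : Set.Ioi (0 : ℝ) => ((r : ℝ) ^ (2 * ∑ i, k i) * Real.exp (-(r : ℝ) ^ 2)))
    _ = _ := by
      congr 1
      rw [hdim, ← aux_half]
      simp only [Measure.volumeIoiPow, ENNReal.ofReal]
      rw [integral_withDensity_eq_integral_smul,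
        integral_subtype_comap measurableSet_Ioi fun a : ℝ ↦ Real.toNNReal (a ^ 2) •
          (a ^ (2 * ∑ i, k i) * Real.exp (-a ^ 2)),
        setIntegral_congr_fun measurableSet_Ioi fun x hx ↦ ?_]
      · rw [NNReal.smul_def, Real.coe_toNNReal _ (sq_nonneg _), smul_eq_mul]
        ring
      · exact (measurable_subtype_coe.pow_const _).real_toNNReal

lemma aux_main (a b c : ℕ) :
      ∫ v : Metric.sphere (0 : EuclideanSpace ℝ (Fin 3)) 1,
          ((v : EuclideanSpace ℝ (Fin 3)) 0) ^ (2 * a) * ((v : EuclideanSpace ℝ (Fin 3)) 1) ^ (2 * b) *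
            ((v : EuclideanSpace ℝ (Fin 3)) 2) ^ (2 * c)
        ∂((volume : Measure (EuclideanSpace ℝ (Fin 3))).toSphere) =
      4 * Real.pi * (2 * a).factorial * (2 * b).factorial * (2 * c).factorial *
          (a + b + c).factorial /
        ((2 * a + 2 * b + 2 * c + 1).factorial * a.factorial * b.factorial * c.factorial) := by
  have h := (aux_polar ![a, b, c]).symm.trans (aux_lhs ![a, b, c])
  have hG : Real.Gamma ((a + b + c + 1 : ℕ) + 1 / 2) = (2 * (a + b + c) + 1).factorial /
      (2 * 4 ^ (a + b + c) * (a + b + c).factorial) * √Real.pi := by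
    have h : ((a + b + c + 1 : ℕ) : ℝ) + 1 / 2 = ((a + b + c : ℕ) + 1 / 2) + 1 := by
      push_cast; ring
    rw [h, Real.Gamma_add_one (by positivity), aux_Gamma, Nat.factorial_succ]
    push_cast
    field_simp
  simp only [Fin.prod_univ_three, Fin.sum_univ_three, Matrix.cons_val] at h
  rw [hG, aux_Gamma, aux_Gamma, aux_Gamma] at h
  rw [show 2 * a + 2 * b + 2 * c + 1 = 2 * (a + b + c) + 1 by ring]
  generalize (∫ v : Metric.sphere (0 : EuclideanSpace ℝ (Fin 3)) 1, (_ : ℝ) ∂_) = S at h ⊢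
  have hpi : √Real.pi ^ 2 = Real.pi := Real.sq_sqrt Real.pi_pos.le
  have hs : √Real.pi ≠ 0 := by positivity
  rw [← hpi]
  simp only [pow_add] at h
  field_simp at h ⊢
  linear_combination h


/-- For all nonnegative integers `a, b, c`,
`∫_{U₃} x^{2a} y^{2b} z^{2c} dσ
  = 4π * (2a)! (2b)! (2c)! (a+b+c)! / ((2a+2b+2c+1)! a! b! c!)`,
and in particular `∫_{U₃} x² y² z² dσ = 4π/105`. -/
theorem sphere_even_moment_closed_form :
    (∀ a b c : ℕ,
      ∫ v : Metric.sphere (0 : EuclideanSpace ℝ (Fin 3)) 1,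
          ((v : EuclideanSpace ℝ (Fin 3)) 0) ^ (2 * a) * ((v : EuclideanSpace ℝ (Fin 3)) 1) ^ (2 * b) *
            ((v : EuclideanSpace ℝ (Fin 3)) 2) ^ (2 * c)
        ∂((volume : Measure (EuclideanSpace ℝ (Fin 3))).toSphere) =
      4 * Real.pi * (2 * a).factorial * (2 * b).factorial * (2 * c).factorial *
          (a + b + c).factorial /
        ((2 * a + 2 * b + 2 * c + 1).factorial * a.factorial * b.factorial * c.factorial)) ∧
    ∫ v : Metric.sphere (0 : EuclideanSpace ℝ (Fin 3)) 1,
        ((v : EuclideanSpace ℝ (Fin 3)) 0) ^ 2 * ((v : EuclideanSpace ℝ (Fin 3)) 1) ^ 2 *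
          ((v : EuclideanSpace ℝ (Fin 3)) 2) ^ 2
      ∂((volume : Measure (EuclideanSpace ℝ (Fin 3))).toSphere) = 4 * Real.pi / 105 := by
  refine ⟨aux_main, ?_⟩
  have h := aux_main 1 1 1
  norm_num [Nat.factorial] at h
  rw [h]
  ring
end

section
/- The 14-point fully symmetric rule with weight 4π/15 at each of the six points (±1, 0, 0), (0, ±1, 0), (0, 0, ±1), and weight 3π/10 at each of the eight points (±1/√3, ±1/√3, ±1/√3), is a cubature rule of degree 5 for U₃: for every polynomial p in three variables of total degree at most 5, ∫_{U₃} p dσ equals the corresponding weighted sum of the values of p at these 14 points. -/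
open MeasureTheory MvPolynomial

/-- Radial moment of the Gaussian. -/
lemma radial_moment (n : ℕ) :
    ∫ x in Set.Ioi (0 : ℝ), x ^ n * Real.exp (-x ^ 2) = (1 / 2) * Real.Gamma (((n : ℝ) + 1) / 2) := by
  have h := integral_rpow_mul_exp_neg_rpow (p := 2) (q := n) (by norm_num)
    (by have : (0 : ℝ) ≤ n := n.cast_nonneg
        linarith)
  rw [← h]
  refine setIntegral_congr_fun measurableSet_Ioi fun x _ => ?_
  simp

lemma line_moment_even (n : ℕ) (hn : Even n) :
    ∫ x : ℝ, x ^ n * Real.exp (-x ^ 2) = Real.Gamma (((n : ℝ) + 1) / 2) := by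
  have h := integral_comp_abs (f := fun x : ℝ => x ^ n * Real.exp (-x ^ 2))
  simp only [hn.pow_abs, sq_abs] at h
  rw [h, radial_moment]
  ring

lemma line_moment_odd (n : ℕ) (hn : Odd n) :
    ∫ x : ℝ, x ^ n * Real.exp (-x ^ 2) = 0 := by
  have h := integral_neg_eq_self (fun x : ℝ => x ^ n * Real.exp (-x ^ 2)) volume
  simp only [hn.neg_pow, neg_sq, neg_mul] at h
  rw [integral_neg] at h
  linarith

lemma space_moment (a b c : ℕ) :
    ∫ x : EuclideanSpace ℝ (Fin 3), (x 0 ^ a * x 1 ^ b * x 2 ^ c) * Real.exp (-‖x‖ ^ 2) =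
      (∫ x : ℝ, x ^ a * Real.exp (-x ^ 2)) * (∫ x : ℝ, x ^ b * Real.exp (-x ^ 2)) *
        (∫ x : ℝ, x ^ c * Real.exp (-x ^ 2)) := by
  rw [← (PiLp.volume_preserving_toLp (Fin 3)).integral_comp
    (MeasurableEquiv.toLp 2 (Fin 3 → ℝ)).measurableEmbedding]
  have h := integral_fintype_prod_volume_eq_prod (𝕜 := ℝ) (ι := Fin 3) (E := fun _ => ℝ)
    (fun i x => x ^ (![a, b, c] i) * Real.exp (-x ^ 2))
  simp only [Fin.prod_univ_three] at h
  simp only [Matrix.cons_val] at h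
  rw [← h]
  congr 1
  ext x
  rw [EuclideanSpace.norm_sq_eq]
  simp only [Fin.sum_univ_three, Real.norm_eq_abs, sq_abs, neg_add, Real.exp_add]
  ring

lemma polar_moment (a b c : ℕ) :
    ∫ x : EuclideanSpace ℝ (Fin 3), (x 0 ^ a * x 1 ^ b * x 2 ^ c) * Real.exp (-‖x‖ ^ 2) =
      (∫ v : Metric.sphere (0 : EuclideanSpace ℝ (Fin 3)) 1,
        (v.1 0 ^ a * v.1 1 ^ b * v.1 2 ^ c)
          ∂((volume : Measure (EuclideanSpace ℝ (Fin 3))).toSphere)) *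
      ∫ r in Set.Ioi (0 : ℝ), r ^ (a + b + c + 2) * Real.exp (-r ^ 2) := by
  set μ : Measure (EuclideanSpace ℝ (Fin 3)) := volume with hμ
  set f : EuclideanSpace ℝ (Fin 3) → ℝ :=
    fun x => (x 0 ^ a * x 1 ^ b * x 2 ^ c) * Real.exp (-‖x‖ ^ 2) with hf
  have hd : Module.finrank ℝ (EuclideanSpace ℝ (Fin 3)) - 1 = 2 := by simp
  calc
    ∫ x, f x ∂μ = ∫ x : ({(0)}ᶜ : Set (EuclideanSpace ℝ (Fin 3))), f x.1 ∂(μ.comap (↑)) := by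
      rw [integral_subtype_comap (measurableSet_singleton _).compl f, restrict_compl_singleton]
    _ = ∫ x, (x.1.1 0 ^ a * x.1.1 1 ^ b * x.1.1 2 ^ c) *
          (x.2.1 ^ (a + b + c) * Real.exp (-x.2.1 ^ 2))
          ∂μ.toSphere.prod (.volumeIoiPow 2) := by
      have h := μ.measurePreserving_homeomorphUnitSphereProd.integral_comp
        (Homeomorph.measurableEmbedding _)
        (fun x => (x.1.1 0 ^ a * x.1.1 1 ^ b * x.1.1 2 ^ c) *
          (x.2.1 ^ (a + b + c) * Real.exp (-x.2.1 ^ 2)))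
      rw [hd] at h
      rw [← h]
      congr 1
      ext x
      have hx : ‖x.1‖ ≠ 0 := norm_ne_zero_iff.2 x.2
      simp only [hf, homeomorphUnitSphereProd_apply_fst_coe,
        homeomorphUnitSphereProd_apply_snd_coe, PiLp.smul_apply, smul_eq_mul, mul_pow, inv_pow,
        pow_add]
      field_simp
    _ = (∫ v : Metric.sphere (0 : EuclideanSpace ℝ (Fin 3)) 1,
          (v.1 0 ^ a * v.1 1 ^ b * v.1 2 ^ c) ∂μ.toSphere) *
        ∫ r : Set.Ioi (0 : ℝ), r.1 ^ (a + b + c) * Real.exp (-r.1 ^ 2) ∂(.volumeIoiPow 2) :=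
      integral_prod_mul (μ := μ.toSphere) (ν := Measure.volumeIoiPow 2)
        (fun v : Metric.sphere (0 : EuclideanSpace ℝ (Fin 3)) 1 =>
          v.1 0 ^ a * v.1 1 ^ b * v.1 2 ^ c)
        (fun r : Set.Ioi (0 : ℝ) => r.1 ^ (a + b + c) * Real.exp (-r.1 ^ 2))
    _ = _ := by
      congr 1
      simp only [Measure.volumeIoiPow, ENNReal.ofReal]
      rw [integral_withDensity_eq_integral_smul,
        integral_subtype_comap measurableSet_Ioi
          fun r : ℝ ↦ Real.toNNReal (r ^ 2) • (r ^ (a + b + c) * Real.exp (-r ^ 2)),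
        setIntegral_congr_fun measurableSet_Ioi fun x hx ↦ ?_]
      · simp only [NNReal.smul_def, smul_eq_mul]
        rw [Real.coe_toNNReal _ (pow_nonneg hx.out.le _)]
        ring
      · exact (measurable_subtype_coe.pow_const _).real_toNNReal

lemma sphere_moment (a b c : ℕ) :
    (∫ v : Metric.sphere (0 : EuclideanSpace ℝ (Fin 3)) 1,
        (v.1 0 ^ a * v.1 1 ^ b * v.1 2 ^ c)
          ∂((volume : Measure (EuclideanSpace ℝ (Fin 3))).toSphere)) *
      ((1 / 2) * Real.Gamma ((((a + b + c + 2 : ℕ) : ℝ) + 1) / 2)) =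
      (∫ x : ℝ, x ^ a * Real.exp (-x ^ 2)) * (∫ x : ℝ, x ^ b * Real.exp (-x ^ 2)) *
        (∫ x : ℝ, x ^ c * Real.exp (-x ^ 2)) := by
  rw [← radial_moment, ← polar_moment, space_moment]

lemma sphere_moment_odd (a b c : ℕ) (h : Odd a ∨ Odd b ∨ Odd c) :
    ∫ v : Metric.sphere (0 : EuclideanSpace ℝ (Fin 3)) 1,
        (v.1 0 ^ a * v.1 1 ^ b * v.1 2 ^ c)
          ∂((volume : Measure (EuclideanSpace ℝ (Fin 3))).toSphere) = 0 := by
  have hm := sphere_moment a b c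
  have hG : (0 : ℝ) < (1 / 2) * Real.Gamma ((((a + b + c + 2 : ℕ) : ℝ) + 1) / 2) :=
    mul_pos (by norm_num) (Real.Gamma_pos_of_pos (by positivity))
  have hz : (∫ x : ℝ, x ^ a * Real.exp (-x ^ 2)) * (∫ x : ℝ, x ^ b * Real.exp (-x ^ 2)) *
        (∫ x : ℝ, x ^ c * Real.exp (-x ^ 2)) = 0 := by
    rcases h with h | h | h <;> simp [line_moment_odd _ h]
  rw [hz] at hm
  exact (mul_eq_zero.1 hm).resolve_right hG.ne'

lemma gamma_half (k : ℕ) :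
    Real.Gamma ((((2 * k : ℕ) : ℝ) + 1) / 2) = (Nat.doubleFactorial (2 * k - 1) : ℕ) * √Real.pi / 2 ^ k := by
  rw [← Real.Gamma_nat_add_half]
  congr 1
  push_cast
  ring

lemma sphere_moment_even (i j k : ℕ) :
    ∫ v : Metric.sphere (0 : EuclideanSpace ℝ (Fin 3)) 1,
        (v.1 0 ^ (2 * i) * v.1 1 ^ (2 * j) * v.1 2 ^ (2 * k))
          ∂((volume : Measure (EuclideanSpace ℝ (Fin 3))).toSphere) =
      4 * Real.pi * ((Nat.doubleFactorial (2 * i - 1) : ℕ) * (Nat.doubleFactorial (2 * j - 1) : ℕ)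
        * (Nat.doubleFactorial (2 * k - 1) : ℕ)) /
        (Nat.doubleFactorial (2 * (i + j + k + 1) - 1) : ℕ) := by
  have hm := sphere_moment (2 * i) (2 * j) (2 * k)
  rw [line_moment_even _ (even_two_mul i), line_moment_even _ (even_two_mul j),
    line_moment_even _ (even_two_mul k),
    show 2 * i + 2 * j + 2 * k + 2 = 2 * (i + j + k + 1) by ring] at hm
  simp only [gamma_half] at hm
  have hpi : (0 : ℝ) < √Real.pi := Real.sqrt_pos.2 Real.pi_pos
  have hsq : √Real.pi ^ 2 = Real.pi := Real.sq_sqrt Real.pi_pos.le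
  have hD : (0 : ℝ) < (Nat.doubleFactorial (2 * (i + j + k + 1) - 1) : ℕ) := by
    exact_mod_cast Nat.doubleFactorial_pos _
  rw [eq_div_iff hD.ne', ← hsq]
  simp only [pow_add, pow_one] at hm
  field_simp at hm
  linear_combination hm

lemma rule_monomial (ε : ℝ) (h2 : ε ^ 2 = 1 / 3) (a b c : ℕ) (h : a + b + c ≤ 5) :
    ∫ v : Metric.sphere (0 : EuclideanSpace ℝ (Fin 3)) 1,
        (v.1 0 ^ a * v.1 1 ^ b * v.1 2 ^ c)
          ∂((volume : Measure (EuclideanSpace ℝ (Fin 3))).toSphere) =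
      (4 * Real.pi / 15) *
        (1 ^ a * 0 ^ b * 0 ^ c + (-1) ^ a * 0 ^ b * 0 ^ c +
          0 ^ a * 1 ^ b * 0 ^ c + 0 ^ a * (-1) ^ b * 0 ^ c +
          0 ^ a * 0 ^ b * 1 ^ c + 0 ^ a * 0 ^ b * (-1) ^ c) +
      (3 * Real.pi / 10) *
        (ε ^ a * ε ^ b * ε ^ c + ε ^ a * ε ^ b * (-ε) ^ c +
          ε ^ a * (-ε) ^ b * ε ^ c + ε ^ a * (-ε) ^ b * (-ε) ^ c +
          (-ε) ^ a * ε ^ b * ε ^ c + (-ε) ^ a * ε ^ b * (-ε) ^ c +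
          (-ε) ^ a * (-ε) ^ b * ε ^ c + (-ε) ^ a * (-ε) ^ b * (-ε) ^ c) := by
  rcases Nat.even_or_odd' a with ⟨i, rfl | rfl⟩
  · rcases Nat.even_or_odd' b with ⟨j, rfl | rfl⟩
    · rcases Nat.even_or_odd' c with ⟨k, rfl | rfl⟩
      · rw [sphere_moment_even]
        simp only [pow_mul, neg_sq, h2, one_pow]
        have hi : i ≤ 2 := by omega
        have hj : j ≤ 2 := by omega
        have hk : k ≤ 2 := by omega
        interval_cases i <;> interval_cases j <;> interval_cases k <;>
          first
          | omega
          | (norm_num [Nat.doubleFactorial]; done)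
          | (norm_num [Nat.doubleFactorial]; ring)
      · rw [sphere_moment_odd _ _ _ (by simp)]
        have ho : Odd (2 * k + 1) := by simp
        simp only [ho.neg_pow, zero_pow ho.pos.ne']
        ring
    · rw [sphere_moment_odd _ _ _ (by simp)]
      have ho : Odd (2 * j + 1) := by simp
      simp only [ho.neg_pow, zero_pow ho.pos.ne']
      ring
  · rw [sphere_moment_odd _ _ _ (by simp)]
    have ho : Odd (2 * i + 1) := by simp
    simp only [ho.neg_pow, zero_pow ho.pos.ne']
    ring

/-- The 14-point fully symmetric rule with weight `4π/15` at each of the six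
points `(±1,0,0), (0,±1,0), (0,0,±1)` and weight `3π/10` at each of the eight points
`(±1/√3, ±1/√3, ±1/√3)` is a cubature rule of degree 5 for `U₃`. -/
theorem degree5_rule_14pt (ε : ℝ) (hε : ε = 1 / Real.sqrt 3)
    (p : MvPolynomial (Fin 3) ℝ) (hp : p.totalDegree ≤ 5) :
    ∫ v : Metric.sphere (0 : EuclideanSpace ℝ (Fin 3)) 1,
        eval (fun i => (v : EuclideanSpace ℝ (Fin 3)) i) p
      ∂((volume : Measure (EuclideanSpace ℝ (Fin 3))).toSphere) =
      (4 * Real.pi / 15) *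
        (eval ![1, 0, 0] p +
          eval ![-1, 0, 0] p +
          eval ![0, 1, 0] p +
          eval ![0, -1, 0] p +
          eval ![0, 0, 1] p +
          eval ![0, 0, -1] p) +
      (3 * Real.pi / 10) *
        (eval ![ε, ε, ε] p +
          eval ![ε, ε, -ε] p +
          eval ![ε, -ε, ε] p +
          eval ![ε, -ε, -ε] p +
          eval ![-ε, ε, ε] p +
          eval ![-ε, ε, -ε] p +
          eval ![-ε, -ε, ε] p +
          eval ![-ε, -ε, -ε] p) := by
  have h2 : ε ^ 2 = 1 / 3 := by
    rw [hε, div_pow, one_pow, Real.sq_sqrt (by norm_num)]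
  simp only [eval_eq', Fin.prod_univ_three]
  rw [integral_finset_sum]
  · simp only [Finset.mul_sum, ← Finset.sum_add_distrib]
    refine Finset.sum_congr rfl fun d hd => ?_
    have hdeg : d 0 + d 1 + d 2 ≤ 5 := by
      have h := le_totalDegree hd
      rw [Finsupp.sum_fintype _ _ (fun _ => rfl), Fin.sum_univ_three] at h
      exact h.trans hp
    rw [integral_const_mul, rule_monomial ε h2 _ _ _ hdeg]
    simp only [Matrix.cons_val]
    ring
  · intro d _
    refine Continuous.integrable_of_hasCompactSupport (by fun_prop) ?_
    exact HasCompactSupport.of_compactSpace _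
end

section
/- Let γ = √((1 − 1/√3)/2) and δ = √((1 + 1/√3)/2). The 38-point fully symmetric rule with weight 4π/105 at each of the six points (±1, 0, 0), (0, ±1, 0), (0, 0, ±1); weight 4π/35 at each of the twenty-four points whose coordinates are a permutation of (±γ, ±δ, 0); and weight 9π/70 at each of the eight points (±1/√3, ±1/√3, ±1/√3), is a cubature rule of degree 9 for U₃: for every polynomial p in three variables of total degree at most 9, ∫_{U₃} p dσ equals the corresponding weighted sum of the values of p at these 38 points. -/
open MeasureTheory MvPolynomial

open scoped Nat

namespace Deg9

abbrev E3 := EuclideanSpace ℝ (Fin 3)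

lemma radial (n : ℕ) : ∫ r in Set.Ioi (0:ℝ), r ^ (2 * n) * Real.exp (-r ^ 2) =
    (2 * n - 1 : ℕ)‼ * √Real.pi / (2 ^ n) / 2 := by
  have h := integral_rpow_mul_exp_neg_rpow (p := 2) (q := (2 * n : ℕ)) (by norm_num)
    (by have : (0:ℝ) ≤ ((2 * n : ℕ) : ℝ) := by positivity
        linarith)
  simp only [Real.rpow_natCast, Real.rpow_ofNat] at h
  rw [h, show (((2 * n : ℕ) : ℝ) + 1) / 2 = n + 1 / 2 by push_cast; ring, Real.Gamma_nat_add_half]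
  ring

lemma moment_even (n : ℕ) : ∫ r : ℝ, r ^ (2 * n) * Real.exp (-r ^ 2) =
    (2 * n - 1 : ℕ)‼ * √Real.pi / (2 ^ n) := by
  have h := integral_comp_abs (f := fun r : ℝ => r ^ (2 * n) * Real.exp (-r ^ 2))
  simp only [sq_abs, pow_mul] at h
  simp only [← pow_mul] at h
  rw [h, radial]; ring

lemma moment_odd (n : ℕ) (hn : Odd n) : ∫ r : ℝ, r ^ n * Real.exp (-r ^ 2) = 0 := by
  have h := integral_neg_eq_self (fun r : ℝ => r ^ n * Real.exp (-r ^ 2)) volume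
  simp only [hn.neg_pow, neg_sq, neg_mul] at h
  rw [integral_neg] at h
  linarith

lemma gauss (a : Fin 3 → ℕ) :
    ∫ x : E3, (∏ i, x i ^ a i) * Real.exp (-‖x‖ ^ 2) =
      ∏ i, ∫ r : ℝ, r ^ a i * Real.exp (-r ^ 2) := by
  rw [← integral_fintype_prod_volume_eq_prod (fun i (r : ℝ) => r ^ a i * Real.exp (-r ^ 2)),
    ← (PiLp.volume_preserving_toLp (Fin 3)).integral_comp
    (MeasurableEquiv.toLp 2 _).measurableEmbedding]
  congr 1
  ext y
  rw [Finset.prod_mul_distrib, ← Real.exp_sum, EuclideanSpace.norm_sq_eq]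
  simp

lemma polar (a : Fin 3 → ℕ) :
    ∫ x : E3, (∏ i, x i ^ a i) * Real.exp (-‖x‖ ^ 2) =
      (∫ v : Metric.sphere (0 : E3) 1, (∏ i, (v : E3) i ^ a i) ∂((volume : Measure E3).toSphere)) *
      ∫ r in Set.Ioi (0:ℝ), r ^ (2 + ∑ i, a i) * Real.exp (-r ^ 2) :=
  calc
    _ = ∫ x : ({(0)}ᶜ : Set E3), (∏ i, x.1 i ^ a i) * Real.exp (-‖x.1‖ ^ 2)
          ∂((volume : Measure E3).comap (↑)) := by
      rw [integral_subtype_comap (measurableSet_singleton _).compl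
        fun x : E3 ↦ (∏ i, x i ^ a i) * Real.exp (-‖x‖ ^ 2), restrict_compl_singleton]
    _ = ∫ x, (∏ i, (x.1 : E3) i ^ a i) * ((x.2 : ℝ) ^ (∑ i, a i) * Real.exp (-(x.2 : ℝ) ^ 2))
          ∂(volume : Measure E3).toSphere.prod (.volumeIoiPow (Module.finrank ℝ E3 - 1)) := by
      rw [← (volume : Measure E3).measurePreserving_homeomorphUnitSphereProd.integral_comp
        (Homeomorph.measurableEmbedding _)]
      congr 1
      ext x
      have hx : ‖x.1‖ ≠ 0 := norm_ne_zero_iff.2 x.2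
      rw [← mul_assoc, ← Finset.prod_pow_eq_pow_sum, ← Finset.prod_mul_distrib]
      simp only [homeomorphUnitSphereProd_apply_snd_coe, homeomorphUnitSphereProd_apply_fst_coe,
        PiLp.smul_apply, smul_eq_mul, ← mul_pow]
      congr 2
      ext i
      field_simp
    _ = (∫ v : Metric.sphere (0 : E3) 1, (∏ i, (v : E3) i ^ a i) ∂((volume : Measure E3).toSphere)) *
        ∫ x : Set.Ioi (0 : ℝ), ((x : ℝ) ^ (∑ i, a i) * Real.exp (-(x : ℝ) ^ 2))
          ∂.volumeIoiPow (Module.finrank ℝ E3 - 1) :=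
      integral_prod_mul (fun v : Metric.sphere (0 : E3) 1 => ∏ i, (v : E3) i ^ a i)
        (fun x : Set.Ioi (0 : ℝ) => ((x : ℝ) ^ (∑ i, a i) * Real.exp (-(x : ℝ) ^ 2)))
    _ = _ := by
      congr 1
      simp only [Measure.volumeIoiPow, ENNReal.ofReal, finrank_euclideanSpace, Fintype.card_fin,
        Nat.add_one_sub_one]
      rw [integral_withDensity_eq_integral_smul,
        integral_subtype_comap measurableSet_Ioi
          fun r : ℝ ↦ Real.toNNReal (r ^ 2) • (r ^ (∑ i, a i) * Real.exp (-r ^ 2)),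
        setIntegral_congr_fun measurableSet_Ioi fun x hx ↦ ?_]
      · rw [NNReal.smul_def, Real.coe_toNNReal _ (pow_nonneg hx.out.le _), smul_eq_mul]
        ring
      · exact (measurable_subtype_coe.pow_const _).real_toNNReal

lemma radial_pos (n : ℕ) : 0 < ∫ r in Set.Ioi (0:ℝ), r ^ n * Real.exp (-r ^ 2) := by
  have h := integral_rpow_mul_exp_neg_rpow (p := 2) (q := (n : ℕ)) (by norm_num)
    (by have : (0:ℝ) ≤ (n : ℝ) := by positivity
        linarith)
  simp only [Real.rpow_natCast, Real.rpow_ofNat] at h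
  rw [h]
  have := Real.Gamma_pos_of_pos (s := ((n:ℝ) + 1) / 2) (by positivity)
  positivity

noncomputable def S (a b c : ℕ) : ℝ :=
  ∫ v : Metric.sphere (0 : E3) 1, ((v : E3) 0 ^ a * (v : E3) 1 ^ b * (v : E3) 2 ^ c)
    ∂((volume : Measure E3).toSphere)

lemma S_mul (a b c : ℕ) :
    S a b c * ∫ r in Set.Ioi (0:ℝ), r ^ (2 + (a + b + c)) * Real.exp (-r ^ 2) =
    (∫ r : ℝ, r ^ a * Real.exp (-r ^ 2)) * (∫ r : ℝ, r ^ b * Real.exp (-r ^ 2)) *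
      (∫ r : ℝ, r ^ c * Real.exp (-r ^ 2)) := by
  have h := (polar ![a, b, c]).symm.trans (gauss _)
  simpa [Fin.prod_univ_three, Fin.sum_univ_three, S] using h

lemma S_odd (a b c : ℕ) (h : Odd a ∨ Odd b ∨ Odd c) : S a b c = 0 := by
  have h1 := S_mul a b c
  have h2 := radial_pos (2 + (a + b + c))
  have h3 : S a b c * ∫ r in Set.Ioi (0:ℝ), r ^ (2 + (a + b + c)) * Real.exp (-r ^ 2) = 0 := by
    rw [h1]
    rcases h with h | h | h <;> simp [moment_odd _ h]
  exact (mul_eq_zero.1 h3).resolve_right h2.ne'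

lemma S_even (i j k : ℕ) : S (2 * i) (2 * j) (2 * k) =
    4 * Real.pi * ((2 * i - 1 : ℕ)‼ * (2 * j - 1 : ℕ)‼ * (2 * k - 1 : ℕ)‼) /
      ((2 * (i + j + k) + 1 : ℕ)‼) := by
  have h1 := S_mul (2 * i) (2 * j) (2 * k)
  rw [show 2 + (2 * i + 2 * j + 2 * k) = 2 * (i + j + k + 1) by ring, radial, moment_even,
    moment_even, moment_even, show 2 * (i + j + k + 1) - 1 = 2 * (i + j + k) + 1 by omega] at h1
  have hpi : √Real.pi ^ 2 = Real.pi := Real.sq_sqrt Real.pi_pos.le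
  have hp : √Real.pi ≠ 0 := by positivity
  have hd : (((2 * (i + j + k) + 1 : ℕ)‼ : ℕ) : ℝ) ≠ 0 :=
    Nat.cast_ne_zero.2 (Nat.doubleFactorial_pos _).ne'
  rw [eq_div_iff hd, ← hpi]
  field_simp at h1
  simp only [pow_add, pow_one] at h1
  have h2 : (2:ℝ) ^ i * 2 ^ j * 2 ^ k ≠ 0 := by positivity
  apply mul_left_cancel₀ h2
  linear_combination h1

noncomputable def Q (γ δ ε : ℝ) (f : (Fin 3 → ℝ) → ℝ) : ℝ :=
  (4 * Real.pi / 105) *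
        (f ![1, 0, 0] +
          f ![-1, 0, 0] +
          f ![0, 1, 0] +
          f ![0, -1, 0] +
          f ![0, 0, 1] +
          f ![0, 0, -1]) +
      (4 * Real.pi / 35) *
        (f ![0, γ, δ] +
          f ![0, γ, -δ] +
          f ![0, -γ, δ] +
          f ![0, -γ, -δ] +
          f ![0, δ, γ] +
          f ![0, δ, -γ] +
          f ![0, -δ, γ] +
          f ![0, -δ, -γ] +
          f ![γ, 0, δ] +
          f ![γ, 0, -δ] +
          f ![-γ, 0, δ] +
          f ![-γ, 0, -δ] +
          f ![δ, 0, γ] +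
          f ![δ, 0, -γ] +
          f ![-δ, 0, γ] +
          f ![-δ, 0, -γ] +
          f ![γ, δ, 0] +
          f ![γ, -δ, 0] +
          f ![-γ, δ, 0] +
          f ![-γ, -δ, 0] +
          f ![δ, γ, 0] +
          f ![δ, -γ, 0] +
          f ![-δ, γ, 0] +
          f ![-δ, -γ, 0]) +
      (9 * Real.pi / 70) *
        (f ![ε, ε, ε] +
          f ![ε, ε, -ε] +
          f ![ε, -ε, ε] +
          f ![ε, -ε, -ε] +
          f ![-ε, ε, ε] +
          f ![-ε, ε, -ε] +
          f ![-ε, -ε, ε] +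
          f ![-ε, -ε, -ε])

lemma Q_odd (γ δ ε : ℝ) (a b c : ℕ) (h : Odd a ∨ Odd b ∨ Odd c) :
    Q γ δ ε (fun v => v 0 ^ a * v 1 ^ b * v 2 ^ c) = 0 := by
  rcases h with h | h | h <;> simp [Q, h.neg_pow, h.pos.ne'] <;> ring

lemma Q_even (γ δ ε s : ℝ) (hγ : γ ^ 2 = (1 - s) / 2) (hδ : δ ^ 2 = (1 + s) / 2)
    (hε : ε ^ 2 = 1 / 3) (hs : s ^ 2 = 1 / 3) (i j k : ℕ) (h : i + j + k ≤ 4) :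
    S (2 * i) (2 * j) (2 * k) =
    Q γ δ ε (fun v => v 0 ^ (2 * i) * v 1 ^ (2 * j) * v 2 ^ (2 * k)) := by
  rw [S_even]
  have hs3 : s ^ 3 = s / 3 := by rw [pow_succ, hs]; ring
  have hs4 : s ^ 4 = 1 / 9 := by rw [show s ^ 4 = (s ^ 2) ^ 2 by ring, hs]; norm_num
  simp only [Q, pow_mul, Matrix.cons_val, neg_sq, hγ, hδ, hε, one_pow, ne_eq,
    OfNat.ofNat_ne_zero, not_false_eq_true, zero_pow]
  have hi : i ≤ 4 := by omega
  have hj : j ≤ 4 := by omega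
  have hk : k ≤ 4 := by omega
  interval_cases i <;> interval_cases j <;> first | (exfalso; omega) | skip
  all_goals interval_cases k <;> first | (exfalso; omega) | skip
  all_goals
    norm_num [Nat.doubleFactorial]
    try ring_nf
    try simp only [hs, hs3, hs4]
    try ring_nf

lemma integrable_eval (p : MvPolynomial (Fin 3) ℝ) :
    Integrable (fun v : Metric.sphere (0 : E3) 1 => eval (fun i => (v : E3) i) p)
      ((volume : Measure E3).toSphere) := by
  have hc : Continuous (fun v : Metric.sphere (0 : E3) 1 => eval (fun i => (v : E3) i) p) := by
    have := MvPolynomial.continuous_eval p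
    exact this.comp (by fun_prop)
  exact hc.integrable_of_hasCompactSupport (HasCompactSupport.of_compactSpace _)

lemma main (γ δ ε : ℝ) (hγ : γ = Real.sqrt ((1 - 1 / Real.sqrt 3) / 2))
    (hδ : δ = Real.sqrt ((1 + 1 / Real.sqrt 3) / 2)) (hε : ε = 1 / Real.sqrt 3)
    (p : MvPolynomial (Fin 3) ℝ) (hp : p.totalDegree ≤ 9) :
    ∫ v : Metric.sphere (0 : E3) 1, eval (fun i => (v : E3) i) p
      ∂((volume : Measure E3).toSphere) = Q γ δ ε (fun v => eval v p) := by
  have h3 : √3 ^ 2 = (3:ℝ) := Real.sq_sqrt (by norm_num)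
  have hs : (1 / √3) ^ 2 = (1:ℝ) / 3 := by rw [div_pow, h3]; norm_num
  have hs1 : (1 / √3) ≤ (1:ℝ) := by nlinarith
  have hs0 : 0 ≤ 1 / √3 := by positivity
  have hγ2 : γ ^ 2 = (1 - 1 / √3) / 2 := by rw [hγ, Real.sq_sqrt]; linarith
  have hδ2 : δ ^ 2 = (1 + 1 / √3) / 2 := by rw [hδ, Real.sq_sqrt]; linarith
  have hε2 : ε ^ 2 = 1 / 3 := by rw [hε, hs]
  rw [← p.support_sum_monomial_coeff]
  refine Finset.sum_induction _ (fun q : MvPolynomial (Fin 3) ℝ =>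
    ∫ v : Metric.sphere (0 : E3) 1, eval (fun i => (v : E3) i) q
      ∂((volume : Measure E3).toSphere) = Q γ δ ε (fun v => eval v q)) ?_ ?_ ?_
  · intro q r hq hr
    simp only [map_add]
    rw [integral_add (integrable_eval q) (integrable_eval r), hq, hr]
    simp only [Q]
    ring
  · simp [Q]
  · intro d hd
    have hdeg : d 0 + d 1 + d 2 ≤ 9 := by
      have := (MvPolynomial.le_totalDegree hd).trans hp
      rw [Finsupp.sum_fintype _ _ (fun _ => rfl)] at this
      simpa [Fin.sum_univ_three] using this
    simp only [MvPolynomial.eval_monomial, Finsupp.prod_fintype, pow_zero, implies_true,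
      Fin.prod_univ_three]
    rw [integral_const_mul]
    have key : S (d 0) (d 1) (d 2) =
        Q γ δ ε (fun v => v 0 ^ d 0 * v 1 ^ d 1 * v 2 ^ d 2) := by
      by_cases h : Odd (d 0) ∨ Odd (d 1) ∨ Odd (d 2)
      · rw [S_odd _ _ _ h, Q_odd _ _ _ _ _ _ h]
      · simp only [not_or, Nat.not_odd_iff_even, even_iff_exists_two_mul] at h
        obtain ⟨⟨i, hi⟩, ⟨j, hj⟩, ⟨k, hk⟩⟩ := h
        rw [hi, hj, hk] at hdeg ⊢
        exact Q_even γ δ ε (1 / √3) hγ2 hδ2 hε2 hs i j k (by omega)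
    unfold S at key
    rw [key]
    simp only [Q]
    ring

end Deg9

/-- Let `γ = √((1 − 1/√3)/2)` and `δ = √((1 + 1/√3)/2)`.  The 38-point fully
symmetric rule with weight `4π/105` at the six points `(±1,0,0), (0,±1,0), (0,0,±1)`; weight
`4π/35` at the twenty-four points whose coordinates are a permutation of `(±γ, ±δ, 0)`; and
weight `9π/70` at the eight points `(±1/√3, ±1/√3, ±1/√3)`, is a cubature rule of degree 9
for `U₃`. -/
theorem degree9_rule_38pt (γ δ ε : ℝ) (hγ : γ = Real.sqrt ((1 - 1 / Real.sqrt 3) / 2))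
    (hδ : δ = Real.sqrt ((1 + 1 / Real.sqrt 3) / 2)) (hε : ε = 1 / Real.sqrt 3)
    (p : MvPolynomial (Fin 3) ℝ) (hp : p.totalDegree ≤ 9) :
    ∫ v : Metric.sphere (0 : EuclideanSpace ℝ (Fin 3)) 1,
        eval (fun i => (v : EuclideanSpace ℝ (Fin 3)) i) p
      ∂((volume : Measure (EuclideanSpace ℝ (Fin 3))).toSphere) =
      (4 * Real.pi / 105) *
        (eval ![1, 0, 0] p +
          eval ![-1, 0, 0] p +
          eval ![0, 1, 0] p +
          eval ![0, -1, 0] p +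
          eval ![0, 0, 1] p +
          eval ![0, 0, -1] p) +
      (4 * Real.pi / 35) *
        (eval ![0, γ, δ] p +
          eval ![0, γ, -δ] p +
          eval ![0, -γ, δ] p +
          eval ![0, -γ, -δ] p +
          eval ![0, δ, γ] p +
          eval ![0, δ, -γ] p +
          eval ![0, -δ, γ] p +
          eval ![0, -δ, -γ] p +
          eval ![γ, 0, δ] p +
          eval ![γ, 0, -δ] p +
          eval ![-γ, 0, δ] p +
          eval ![-γ, 0, -δ] p +
          eval ![δ, 0, γ] p +
          eval ![δ, 0, -γ] p +
          eval ![-δ, 0, γ] p +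
          eval ![-δ, 0, -γ] p +
          eval ![γ, δ, 0] p +
          eval ![γ, -δ, 0] p +
          eval ![-γ, δ, 0] p +
          eval ![-γ, -δ, 0] p +
          eval ![δ, γ, 0] p +
          eval ![δ, -γ, 0] p +
          eval ![-δ, γ, 0] p +
          eval ![-δ, -γ, 0] p) +
      (9 * Real.pi / 70) *
        (eval ![ε, ε, ε] p +
          eval ![ε, ε, -ε] p +
          eval ![ε, -ε, ε] p +
          eval ![ε, -ε, -ε] p +
          eval ![-ε, ε, ε] p +
          eval ![-ε, ε, -ε] p +
          eval ![-ε, -ε, ε] p +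
          eval ![-ε, -ε, -ε] p) := by
  exact Deg9.main γ δ ε hγ hδ hε p hp
end

section
/- The 50-point fully symmetric rule with weight 16π/315 at each of the six points (±1, 0, 0), (0, ±1, 0), (0, 0, ±1); weight 256π/2835 at each of the twelve points whose coordinates are a permutation of (±1/√2, ±1/√2, 0); weight 27π/320 at each of the eight points (±1/√3, ±1/√3, ±1/√3); and weight 14641π/181440 at each of the twenty-four points whose coordinates are a permutation of (±1/√11, ±1/√11, ±3/√11) (two coordinates of absolute value 1/√11 and one of absolute value 3/√11), is a cubature rule of degree 11 for U₃: for every polynomial p in three variables of total degree at most 11, ∫_{U₃} p dσ equals the corresponding weighted sum of the values of p at these 50 points. -/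
open MeasureTheory MvPolynomial
open Set

abbrev E3 := EuclideanSpace ℝ (Fin 3)

lemma H_even (k : ℕ) : ∫ r in Ioi (0:ℝ), r ^ (2*k) * Real.exp (-r^2) = ((2 * k - 1 : ℕ).doubleFactorial * √Real.pi / (2 ^ k)) / 2 := by
  have h := integral_rpow_mul_exp_neg_rpow (p := 2) (q := ((2*k : ℕ):ℝ)) (by norm_num) (lt_of_lt_of_le (by norm_num) (Nat.cast_nonneg _))
  simp only [Real.rpow_natCast, Real.rpow_two] at h
  rw [h, ← Real.Gamma_nat_add_half]
  have : (((2*k : ℕ):ℝ) + 1)/2 = k + 1/2 := by push_cast; ring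
  rw [this]; ring

lemma H_pos (n : ℕ) : 0 < ∫ r in Ioi (0:ℝ), r ^ n * Real.exp (-r^2) := by
  have hn : (-1:ℝ) < n := by have : (0:ℝ) ≤ (n:ℝ) := Nat.cast_nonneg _
                             linarith
  have h := integral_rpow_mul_exp_neg_rpow (p := 2) (q := (n:ℝ)) (by norm_num) hn
  simp only [Real.rpow_natCast, Real.rpow_two] at h
  rw [h]
  have := Real.Gamma_pos_of_pos (s := ((n:ℝ)+1)/2) (by linarith)
  positivity

lemma G_even (k : ℕ) : ∫ r : ℝ, r ^ (2*k) * Real.exp (-r^2) = ((2 * k - 1 : ℕ).doubleFactorial * √Real.pi / (2 ^ k)) := by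
  have h := integral_comp_abs (f := fun r : ℝ => r ^ (2*k) * Real.exp (-r^2))
  rw [H_even] at h
  simp only [pow_mul, sq_abs] at h ⊢
  rw [h]; ring

lemma G_odd (k : ℕ) (hk : Odd k) : ∫ r : ℝ, r ^ k * Real.exp (-r^2) = 0 := by
  have h := integral_neg_eq_self (fun r : ℝ => r ^ k * Real.exp (-r^2)) volume
  simp only [hk.neg_pow, neg_sq, neg_mul, integral_neg] at h
  linarith

lemma gauss3 (a b c : ℕ) : ∫ x : E3, x 0 ^ a * x 1 ^ b * x 2 ^ c * Real.exp (-‖x‖^2) =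
    (∫ r : ℝ, r ^ a * Real.exp (-r^2)) * (∫ r : ℝ, r ^ b * Real.exp (-r^2)) * (∫ r : ℝ, r ^ c * Real.exp (-r^2)) := by
  rw [← (PiLp.volume_preserving_toLp (Fin 3)).integral_comp
    (MeasurableEquiv.toLp 2 _).measurableEmbedding]
  have h := integral_fintype_prod_volume_eq_prod (fun (i : Fin 3) (r : ℝ) => r ^ (![a,b,c] i) * Real.exp (-r^2))
  simp only [Fin.prod_univ_three] at h
  simp only [Matrix.cons_val] at h
  rw [← h]
  congr 1 with x
  simp only [EuclideanSpace.norm_sq_eq, Fin.sum_univ_three, Real.norm_eq_abs, sq_abs]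
  rw [neg_add, neg_add, Real.exp_add, Real.exp_add]
  ring

lemma polar (a b c : ℕ) : ∫ x : E3, x 0 ^ a * x 1 ^ b * x 2 ^ c * Real.exp (-‖x‖^2) =
   (∫ v : Metric.sphere (0 : E3) 1, (v : E3) 0 ^ a * (v : E3) 1 ^ b * (v : E3) 2 ^ c ∂(volume : Measure E3).toSphere) *
   ∫ r in Ioi (0:ℝ), r ^ (a+b+c+2) * Real.exp (-r^2) := by
  calc
    _ = ∫ x : ({(0)}ᶜ : Set E3), x.1 0 ^ a * x.1 1 ^ b * x.1 2 ^ c * Real.exp (-‖x.1‖^2) ∂((volume : Measure E3).comap Subtype.val) := by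
      rw [integral_subtype_comap (measurableSet_singleton _).compl fun x : E3 ↦ x 0 ^ a * x 1 ^ b * x 2 ^ c * Real.exp (-‖x‖^2),
        restrict_compl_singleton]
    _ = ∫ x, (x.1.1 0 ^ a * x.1.1 1 ^ b * x.1.1 2 ^ c) * (x.2.1 ^ (a+b+c) * Real.exp (-x.2.1^2)) ∂(volume : Measure E3).toSphere.prod (.volumeIoiPow (Module.finrank ℝ E3 - 1)) := by
      rw [← (volume : Measure E3).measurePreserving_homeomorphUnitSphereProd.integral_comp
        (Homeomorph.measurableEmbedding _)]
      congr 1 with x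
      have hx : ‖x.1‖ ≠ 0 := norm_ne_zero_iff.2 x.2
      simp only [homeomorphUnitSphereProd_apply_fst_coe, homeomorphUnitSphereProd_apply_snd_coe, PiLp.smul_apply, smul_eq_mul, mul_pow, pow_add, inv_pow]
      field_simp
    _ = _ := by
      rw [integral_prod_mul (fun v : Metric.sphere (0 : E3) 1 => (v : E3) 0 ^ a * (v : E3) 1 ^ b * (v : E3) 2 ^ c) (fun r : Ioi (0:ℝ) => r.1 ^ (a+b+c) * Real.exp (-r.1^2))]
      congr 1
      simp only [Measure.volumeIoiPow, ENNReal.ofReal]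
      rw [integral_withDensity_eq_integral_smul, 
        integral_subtype_comap measurableSet_Ioi fun r ↦ Real.toNNReal (r ^ (Module.finrank ℝ E3 - 1)) • (r ^ (a+b+c) * Real.exp (-r^2)),
        setIntegral_congr_fun measurableSet_Ioi fun x hx ↦ ?_]
      · beta_reduce
        rw [NNReal.smul_def, Real.coe_toNNReal _ (pow_nonneg hx.out.le _)]
        simp [pow_add]; ring
      · exact (measurable_subtype_coe.pow_const _).real_toNNReal

noncomputable def S (a b c : ℕ) : ℝ := ∫ v : Metric.sphere (0 : E3) 1, (v : E3) 0 ^ a * (v : E3) 1 ^ b * (v : E3) 2 ^ c ∂(volume : Measure E3).toSphere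

lemma S_odd (a b c : ℕ) (h : Odd a ∨ Odd b ∨ Odd c) : S a b c = 0 := by
  have h1 := polar a b c
  rw [gauss3] at h1
  have h2 := H_pos (a+b+c+2)
  have h3 : S a b c * ∫ r in Ioi (0:ℝ), r ^ (a+b+c+2) * Real.exp (-r^2) = 0 := by
    rw [S, ← h1]
    rcases h with h | h | h <;> simp [G_odd _ h]
  exact (mul_eq_zero.1 h3).resolve_right h2.ne'

lemma S_even (i j k : ℕ) : S (2*i) (2*j) (2*k) = 4 * Real.pi * ((2*i-1).doubleFactorial * (2*j-1).doubleFactorial * (2*k-1).doubleFactorial / (2*(i+j+k)+1).doubleFactorial) := by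
  have h1 := polar (2*i) (2*j) (2*k)
  rw [gauss3, show 2*i+2*j+2*k+2 = 2*(i+j+k+1) by ring, H_even, G_even, G_even, G_even, show 2*(i+j+k+1)-1 = 2*(i+j+k)+1 by omega] at h1
  change _ = S _ _ _ * _ at h1
  have hp : 0 < √Real.pi := Real.sqrt_pos.2 Real.pi_pos
  have hd : (0:ℝ) < (2*(i+j+k)+1).doubleFactorial := by exact_mod_cast Nat.doubleFactorial_pos _
  have hs : Real.pi = √Real.pi * √Real.pi := (Real.mul_self_sqrt Real.pi_pos.le).symm
  rw [hs]
  field_simp at h1 ⊢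
  rw [pow_add, pow_add, pow_add] at h1
  field_simp at h1
  linarith

noncomputable def Q (β ε ζ η : ℝ) (f : (Fin 3 → ℝ) → ℝ) : ℝ :=
      (16 * Real.pi / 315) *
        (f ![1, 0, 0] +
          f ![-1, 0, 0] +
          f ![0, 1, 0] +
          f ![0, -1, 0] +
          f ![0, 0, 1] +
          f ![0, 0, -1]) +
      (256 * Real.pi / 2835) *
        (f ![0, β, β] +
          f ![0, β, -β] +
          f ![0, -β, β] +
          f ![0, -β, -β] +
          f ![β, 0, β] +
          f ![β, 0, -β] +
          f ![-β, 0, β] +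
          f ![-β, 0, -β] +
          f ![β, β, 0] +
          f ![β, -β, 0] +
          f ![-β, β, 0] +
          f ![-β, -β, 0]) +
      (27 * Real.pi / 320) *
        (f ![ε, ε, ε] +
          f ![ε, ε, -ε] +
          f ![ε, -ε, ε] +
          f ![ε, -ε, -ε] +
          f ![-ε, ε, ε] +
          f ![-ε, ε, -ε] +
          f ![-ε, -ε, ε] +
          f ![-ε, -ε, -ε]) +
      (14641 * Real.pi / 181440) *
        (f ![η, ζ, ζ] +
          f ![η, ζ, -ζ] +
          f ![η, -ζ, ζ] +
          f ![η, -ζ, -ζ] +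
          f ![-η, ζ, ζ] +
          f ![-η, ζ, -ζ] +
          f ![-η, -ζ, ζ] +
          f ![-η, -ζ, -ζ] +
          f ![ζ, η, ζ] +
          f ![ζ, η, -ζ] +
          f ![ζ, -η, ζ] +
          f ![ζ, -η, -ζ] +
          f ![-ζ, η, ζ] +
          f ![-ζ, η, -ζ] +
          f ![-ζ, -η, ζ] +
          f ![-ζ, -η, -ζ] +
          f ![ζ, ζ, η] +
          f ![ζ, ζ, -η] +
          f ![ζ, -ζ, η] +
          f ![ζ, -ζ, -η] +
          f ![-ζ, ζ, η] +
          f ![-ζ, ζ, -η] +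
          f ![-ζ, -ζ, η] +
          f ![-ζ, -ζ, -η])

lemma Q_sum {ι : Type*} (β ε ζ η : ℝ) (s : Finset ι) (co : ι → ℝ) (f : ι → (Fin 3 → ℝ) → ℝ) :
    Q β ε ζ η (fun x => ∑ d ∈ s, co d * f d x) = ∑ d ∈ s, co d * Q β ε ζ η (f d) := by
  classical
  induction s using Finset.induction_on with
  | empty => simp [Q]
  | insert a s ha ih =>
    simp only [Finset.sum_insert ha]
    rw [← ih]
    simp only [Q]
    ring

/-- The rule on monomials in the symmetric setting. -/
lemma Q_mono (β ε ζ η : ℝ) (a b c : ℕ) :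
    Q β ε ζ η (fun x => x 0 ^ a * x 1 ^ b * x 2 ^ c) =
      (1 + (-1) ^ a) * (1 + (-1) ^ b) * (1 + (-1) ^ c) *
      ((16 * Real.pi / 315) / 4 * (0 ^ b * 0 ^ c + 0 ^ a * 0 ^ c + 0 ^ a * 0 ^ b) +
       (256 * Real.pi / 2835) / 2 * (0 ^ a * β ^ b * β ^ c + β ^ a * 0 ^ b * β ^ c + β ^ a * β ^ b * 0 ^ c) +
       (27 * Real.pi / 320) * (ε ^ a * ε ^ b * ε ^ c) +
       (14641 * Real.pi / 181440) * (η ^ a * ζ ^ b * ζ ^ c + ζ ^ a * η ^ b * ζ ^ c + ζ ^ a * ζ ^ b * η ^ c)) := by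
  have hz : ∀ n : ℕ, (-1 : ℝ) ^ n * 0 ^ n = 0 ^ n := fun n => by rw [← mul_pow]; norm_num
  simp only [Q, Matrix.cons_val, one_pow]
  rw [neg_pow β a, neg_pow β b, neg_pow β c, neg_pow ε a, neg_pow ε b, neg_pow ε c,
    neg_pow ζ a, neg_pow ζ b, neg_pow ζ c, neg_pow η a, neg_pow η b, neg_pow η c]
  rcases neg_one_pow_eq_or ℝ a with ha | ha <;> rcases neg_one_pow_eq_or ℝ b with hb | hb <;>
    rcases neg_one_pow_eq_or ℝ c with hc | hc <;>
    (have h1 := hz a; have h2 := hz b; have h3 := hz c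
     rw [ha] at h1; rw [hb] at h2; rw [hc] at h3
     simp only [ha, hb, hc]
     first
     | ring1
     | (try (have h1 : (0:ℝ) ^ a = 0 := by linarith
             rw [h1])
        try (have h2 : (0:ℝ) ^ b = 0 := by linarith
             rw [h2])
        try (have h3 : (0:ℝ) ^ c = 0 := by linarith
             rw [h3])
        ring))

lemma mono_rule (β ε ζ η : ℝ) (hβ : β = 1 / Real.sqrt 2) (hε : ε = 1 / Real.sqrt 3)
    (hζ : ζ = 1 / Real.sqrt 11) (hη : η = 3 / Real.sqrt 11) (a b c : ℕ) (h : a + b + c ≤ 11) :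
    S a b c = Q β ε ζ η (fun x => x 0 ^ a * x 1 ^ b * x 2 ^ c) := by
  have hβ2 : β ^ 2 = 1 / 2 := by rw [hβ, div_pow, Real.sq_sqrt] <;> norm_num
  have hε2 : ε ^ 2 = 1 / 3 := by rw [hε, div_pow, Real.sq_sqrt] <;> norm_num
  have hζ2 : ζ ^ 2 = 1 / 11 := by rw [hζ, div_pow, Real.sq_sqrt] <;> norm_num
  have hη2 : η ^ 2 = 9 / 11 := by rw [hη, div_pow, Real.sq_sqrt] <;> norm_num
  rw [Q_mono]
  by_cases ho : Odd a ∨ Odd b ∨ Odd c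
  · rw [S_odd a b c ho]
    rcases ho with ho | ho | ho <;> simp [ho.neg_one_pow]
  · push Not at ho
    simp only [Nat.not_odd_iff_even, even_iff_exists_two_mul] at ho
    obtain ⟨⟨i, rfl⟩, ⟨j, rfl⟩, ⟨k, rfl⟩⟩ := ho
    rw [S_even]
    simp only [pow_mul, hβ2, hε2, hζ2, hη2]
    have hi : i ≤ 5 := by omega
    have hj : j ≤ 5 := by omega
    have hk : k ≤ 5 := by omega
    interval_cases i <;> interval_cases j <;> interval_cases k <;>
      first
      | omega
      | (norm_num [Nat.doubleFactorial]; try ring)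

/-- The 50-point fully symmetric rule with weight `16π/315` at the six points
`(±1,0,0), (0,±1,0), (0,0,±1)`; weight `256π/2835` at the twelve points whose coordinates are
a permutation of `(±1/√2, ±1/√2, 0)`; weight `27π/320` at the eight points
`(±1/√3, ±1/√3, ±1/√3)`; and weight `14641π/181440` at the twenty-four points whose
coordinates are a permutation of `(±1/√11, ±1/√11, ±3/√11)`, is a cubature rule of degree 11
for `U₃`. -/
theorem degree11_rule_50pt (β ε ζ η : ℝ) (hβ : β = 1 / Real.sqrt 2) (hε : ε = 1 / Real.sqrt 3)
    (hζ : ζ = 1 / Real.sqrt 11) (hη : η = 3 / Real.sqrt 11)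
    (p : MvPolynomial (Fin 3) ℝ) (hp : p.totalDegree ≤ 11) :
    ∫ v : Metric.sphere (0 : EuclideanSpace ℝ (Fin 3)) 1,
        eval (fun i => (v : EuclideanSpace ℝ (Fin 3)) i) p
      ∂((volume : Measure (EuclideanSpace ℝ (Fin 3))).toSphere) =
      (16 * Real.pi / 315) *
        (eval ![1, 0, 0] p +
          eval ![-1, 0, 0] p +
          eval ![0, 1, 0] p +
          eval ![0, -1, 0] p +
          eval ![0, 0, 1] p +
          eval ![0, 0, -1] p) +
      (256 * Real.pi / 2835) *
        (eval ![0, β, β] p +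
          eval ![0, β, -β] p +
          eval ![0, -β, β] p +
          eval ![0, -β, -β] p +
          eval ![β, 0, β] p +
          eval ![β, 0, -β] p +
          eval ![-β, 0, β] p +
          eval ![-β, 0, -β] p +
          eval ![β, β, 0] p +
          eval ![β, -β, 0] p +
          eval ![-β, β, 0] p +
          eval ![-β, -β, 0] p) +
      (27 * Real.pi / 320) *
        (eval ![ε, ε, ε] p +
          eval ![ε, ε, -ε] p +
          eval ![ε, -ε, ε] p +
          eval ![ε, -ε, -ε] p +
          eval ![-ε, ε, ε] p +
          eval ![-ε, ε, -ε] p +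
          eval ![-ε, -ε, ε] p +
          eval ![-ε, -ε, -ε] p) +
      (14641 * Real.pi / 181440) *
        (eval ![η, ζ, ζ] p +
          eval ![η, ζ, -ζ] p +
          eval ![η, -ζ, ζ] p +
          eval ![η, -ζ, -ζ] p +
          eval ![-η, ζ, ζ] p +
          eval ![-η, ζ, -ζ] p +
          eval ![-η, -ζ, ζ] p +
          eval ![-η, -ζ, -ζ] p +
          eval ![ζ, η, ζ] p +
          eval ![ζ, η, -ζ] p +
          eval ![ζ, -η, ζ] p +
          eval ![ζ, -η, -ζ] p +
          eval ![-ζ, η, ζ] p +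
          eval ![-ζ, η, -ζ] p +
          eval ![-ζ, -η, ζ] p +
          eval ![-ζ, -η, -ζ] p +
          eval ![ζ, ζ, η] p +
          eval ![ζ, ζ, -η] p +
          eval ![ζ, -ζ, η] p +
          eval ![ζ, -ζ, -η] p +
          eval ![-ζ, ζ, η] p +
          eval ![-ζ, ζ, -η] p +
          eval ![-ζ, -ζ, η] p +
          eval ![-ζ, -ζ, -η] p) := by
  change _ = Q β ε ζ η (fun x => eval x p)
  simp only [eval_eq', Fin.prod_univ_three]
  rw [Q_sum, integral_finsetSum]
  · refine Finset.sum_congr rfl fun d hd => ?_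
    rw [integral_const_mul, ← mono_rule β ε ζ η hβ hε hζ hη]
    · rfl
    · have := (le_totalDegree hd).trans hp
      rw [Finsupp.sum_fintype _ _ (fun _ => rfl), Fin.sum_univ_three] at this
      exact this
  · intro d _
    apply Continuous.integrable_of_hasCompactSupport
    · fun_prop
    · exact HasCompactSupport.of_compactSpace _
end

section
/- Let m ≥ 1 and let {(y_j, A_j)}_{j=1}^m be a quadrature rule on [−1, 1] that is exact for all polynomials of degree at most 2m − 1. For k = 1, …, 2m set φ_k = (2k − 1)π/(2m), and consider the 2m²-point product rule on U₃ whose points are P_{j,k} = ( √(1 − y_j²) cos(φ_k), √(1 − y_j²) sin(φ_k), y_j ) with weights B_{j,k} = (π/m) A_j. Then this rule is a cubature rule of degree 2m − 1 for U₃: for every polynomial p in three variables of total degree at most 2m − 1, Σ_{j=1}^m Σ_{k=1}^{2m} (π/m) A_j · p(P_{j,k}) = ∫_{U₃} p dσ. -/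
open MeasureTheory

/-- Half-line Gaussian moments. -/
noncomputable def gR (k : ℕ) : ℝ := ∫ r in Set.Ioi (0 : ℝ), r ^ k * Real.exp (-r ^ 2)

/-- Gaussian moments on the line. -/
noncomputable def gI (k : ℕ) : ℝ := ∫ x : ℝ, x ^ k * Real.exp (-x ^ 2)

lemma gR_eq (k : ℕ) : gR k = 1 / 2 * Real.Gamma (((k : ℝ) + 1) / 2) := by
  have h := integral_rpow_mul_exp_neg_rpow (p := 2) (q := k) (by norm_num)
    (by have : (0 : ℝ) ≤ k := Nat.cast_nonneg k
        linarith)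
  rw [← h, gR]
  norm_cast

lemma gR_pos (k : ℕ) : 0 < gR k := by
  rw [gR_eq]
  have := Real.Gamma_pos_of_pos (s := ((k : ℝ) + 1) / 2) (by positivity)
  positivity

lemma gR_succ (k : ℕ) : gR (k + 2) = ((k : ℝ) + 1) / 2 * gR k := by
  rw [gR_eq, gR_eq]
  have := Real.Gamma_add_one (s := ((k : ℝ) + 1) / 2) (by positivity)
  have e : (((k + 2 : ℕ) : ℝ) + 1) / 2 = ((k : ℝ) + 1) / 2 + 1 := by push_cast; ring
  rw [e, this]; ring

lemma gR_one : gR 1 = 1 / 2 := by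
  rw [gR_eq]; norm_num

lemma gI_even (k : ℕ) (hk : Even k) : gI k = 2 * gR k := by
  rw [gI, gR, ← integral_comp_abs]
  simp only [hk.pow_abs, sq_abs]

lemma gI_odd (k : ℕ) (hk : Odd k) : gI k = 0 := by
  have h := integral_neg_eq_self (fun x : ℝ => x ^ k * Real.exp (-x ^ 2)) volume
  simp only [hk.neg_pow, neg_sq, neg_mul] at h
  rw [integral_neg] at h
  change -gI k = gI k at h
  linarith

lemma gI_succ (k : ℕ) : gI (k + 2) = ((k : ℝ) + 1) / 2 * gI k := by
  rcases Nat.even_or_odd k with h | h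
  · rw [gI_even k h, gI_even (k + 2) (by grind), gR_succ]; ring
  · rw [gI_odd k h, gI_odd (k + 2) (by grind)]; ring

/-- The trigonometric moments. -/
noncomputable def gT (a b : ℕ) : ℝ :=
  ∫ θ in (-Real.pi)..Real.pi, Real.cos θ ^ a * Real.sin θ ^ b

lemma polar_two (a b : ℕ) : gI a * gI b = gR (a + b + 1) * gT a b := by
  have h := integral_comp_polarCoord_symm
    (fun p : ℝ × ℝ => (p.1 ^ a * Real.exp (-p.1 ^ 2)) * (p.2 ^ b * Real.exp (-p.2 ^ 2)))
  rw [Measure.volume_eq_prod,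
    integral_prod_mul (fun x : ℝ => x ^ a * Real.exp (-x ^ 2))
      (fun x : ℝ => x ^ b * Real.exp (-x ^ 2))] at h
  change _ = gI a * gI b at h
  rw [← h]
  have e : ∀ p : ℝ × ℝ, p.1 • (((polarCoord.symm p).1 ^ a * Real.exp (-(polarCoord.symm p).1 ^ 2)) *
      ((polarCoord.symm p).2 ^ b * Real.exp (-(polarCoord.symm p).2 ^ 2))) =
      (p.1 ^ (a + b + 1) * Real.exp (-p.1 ^ 2)) * (Real.cos p.2 ^ a * Real.sin p.2 ^ b) := by
    intro p
    have e1 : Real.exp (-p.1 ^ 2) = Real.exp (-(p.1 * Real.cos p.2) ^ 2) *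
        Real.exp (-(p.1 * Real.sin p.2) ^ 2) := by
      rw [← Real.exp_add]; congr 1
      linear_combination (p.1 ^ 2) * (Real.sin_sq_add_cos_sq p.2)
    rw [e1]
    simp only [polarCoord_symm_apply, smul_eq_mul]
    ring
  simp only [e]
  rw [polarCoord_target, setIntegral_prod_mul (fun r : ℝ => r ^ (a + b + 1) * Real.exp (-r ^ 2))
    (fun t : ℝ => Real.cos t ^ a * Real.sin t ^ b)]
  rw [gT, intervalIntegral.integral_of_le (by linarith [Real.pi_pos]),
    integral_Ioc_eq_integral_Ioo, gR]

/-- Monomial integrals on the sphere. -/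
noncomputable def gS (a b c : ℕ) : ℝ :=
  ∫ v : Metric.sphere (0 : EuclideanSpace ℝ (Fin 3)) 1,
    (v : EuclideanSpace ℝ (Fin 3)) 0 ^ a * (v : EuclideanSpace ℝ (Fin 3)) 1 ^ b *
      (v : EuclideanSpace ℝ (Fin 3)) 2 ^ c
    ∂((volume : Measure (EuclideanSpace ℝ (Fin 3))).toSphere)

/-- Gaussian weighted monomial in space. -/
noncomputable def gF (a b c : ℕ) (x : EuclideanSpace ℝ (Fin 3)) : ℝ :=
  x 0 ^ a * x 1 ^ b * x 2 ^ c * Real.exp (-‖x‖ ^ 2)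

lemma gF_int (a b c : ℕ) : ∫ x, gF a b c x = gI a * gI b * gI c := by
  have h := (PiLp.volume_preserving_toLp (Fin 3)).integral_comp
    (MeasurableEquiv.toLp 2 (Fin 3 → ℝ)).measurableEmbedding (gF a b c)
  rw [← h]
  have e : ∀ x : Fin 3 → ℝ, gF a b c (WithLp.toLp 2 x) =
      ∏ i, (fun (i : Fin 3) (t : ℝ) => t ^ (![a, b, c] i) * Real.exp (-t ^ 2)) i (x i) := by
    intro x
    simp only [gF, EuclideanSpace.norm_sq_eq, Fin.sum_univ_three, Fin.prod_univ_three,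
      Real.norm_eq_abs, sq_abs, neg_add, Real.exp_add]
    simp
    ring
  simp only [e]
  rw [integral_fintype_prod_volume_eq_prod
    (fun (i : Fin 3) (t : ℝ) => t ^ (![a, b, c] i) * Real.exp (-t ^ 2))]
  simp [Fin.prod_univ_three, gI]

lemma gF_sphere (a b c : ℕ) : ∫ x, gF a b c x = gS a b c * gR (a + b + c + 2) := by
  have hd : Module.finrank ℝ (EuclideanSpace ℝ (Fin 3)) - 1 = 2 := by simp
  calc
    ∫ x, gF a b c x = ∫ x : ({(0)}ᶜ : Set (EuclideanSpace ℝ (Fin 3))), gF a b c x.1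
        ∂((volume : Measure (EuclideanSpace ℝ (Fin 3))).comap Subtype.val) := by
      rw [integral_subtype_comap (measurableSet_singleton _).compl fun x ↦ gF a b c x,
        restrict_compl_singleton]
    _ = ∫ x, (fun v : Metric.sphere (0 : EuclideanSpace ℝ (Fin 3)) 1 =>
          (v : EuclideanSpace ℝ (Fin 3)) 0 ^ a * (v : EuclideanSpace ℝ (Fin 3)) 1 ^ b *
      (v : EuclideanSpace ℝ (Fin 3)) 2 ^ c) x.1 *
        (fun r : Set.Ioi (0 : ℝ) => r.1 ^ (a + b + c) * Real.exp (-r.1 ^ 2)) x.2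
        ∂(volume : Measure (EuclideanSpace ℝ (Fin 3))).toSphere.prod
          (.volumeIoiPow (Module.finrank ℝ (EuclideanSpace ℝ (Fin 3)) - 1)) := by
      rw [← (volume : Measure
        (EuclideanSpace ℝ (Fin 3))).measurePreserving_homeomorphUnitSphereProd.integral_comp
        (Homeomorph.measurableEmbedding _)]
      congr 1
      funext x
      have hx : ‖x.1‖ ≠ 0 := norm_ne_zero_iff.2 x.2
      simp only [gF, homeomorphUnitSphereProd_apply_fst_coe, homeomorphUnitSphereProd_apply_snd_coe,
        PiLp.smul_apply, smul_eq_mul]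
      simp only [mul_pow, inv_pow, pow_add]
      field_simp
    _ = gS a b c * gR (a + b + c + 2) := by
      rw [hd, integral_prod_mul (fun v : Metric.sphere (0 : EuclideanSpace ℝ (Fin 3)) 1 =>
          (v : EuclideanSpace ℝ (Fin 3)) 0 ^ a * (v : EuclideanSpace ℝ (Fin 3)) 1 ^ b *
            (v : EuclideanSpace ℝ (Fin 3)) 2 ^ c)
        (fun r : Set.Ioi (0 : ℝ) => r.1 ^ (a + b + c) * Real.exp (-r.1 ^ 2)), gS]
      congr 1
      simp only [Measure.volumeIoiPow, ENNReal.ofReal]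
      rw [integral_withDensity_eq_integral_smul,
        integral_subtype_comap measurableSet_Ioi fun t : ℝ ↦ Real.toNNReal (t ^ 2) •
          (t ^ (a + b + c) * Real.exp (-t ^ 2)), gR,
        setIntegral_congr_fun measurableSet_Ioi fun x hx ↦ ?_]
      · rw [NNReal.smul_def, Real.coe_toNNReal _ (pow_nonneg (le_of_lt hx) _), smul_eq_mul]
        ring
      · exact (measurable_subtype_coe.pow_const _).real_toNNReal

/-- Polynomial moments. -/
noncomputable def gB (n c : ℕ) : ℝ := ∫ t in (-1 : ℝ)..1, t ^ c * (1 - t ^ 2) ^ n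

lemma gB_succ (n c : ℕ) : gB (n + 1) c = gB n c - gB n (c + 2) := by
  rw [gB, gB, gB, ← intervalIntegral.integral_sub]
  · congr 1; funext t; ring
  · exact (by fun_prop : Continuous _).intervalIntegrable _ _
  · exact (by fun_prop : Continuous _).intervalIntegrable _ _

lemma gB_rel (n : ℕ) : ∀ c, gR (2 * n + 1) * gI c = gB n c * gR (2 * n + c + 2) := by
  induction n with
  | zero =>
    intro c
    have : gB 0 c = (1 - (-1) ^ (c + 1)) / (c + 1) := by
      simp [gB]
    rw [this, mul_zero, zero_add, zero_add, gR_one, gR_succ]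
    have : (c : ℝ) + 1 ≠ 0 := by positivity
    rcases Nat.even_or_odd c with h | h
    · rw [gI_even c h, (by grind : Odd (c + 1)).neg_one_pow]
      field_simp; ring
    · rw [gI_odd c h, (by grind : Even (c + 1)).neg_one_pow]
      simp
  | succ n ih =>
    intro c
    have h1 := ih c
    have h2 := ih (c + 2)
    rw [gB_succ]
    have e0 : 2 * (n + 1) + 1 = 2 * n + 1 + 2 := by ring
    have e1 : 2 * (n + 1) + c + 2 = 2 * n + c + 2 + 2 := by ring
    have e2 : 2 * n + (c + 2) + 2 = 2 * n + c + 2 + 2 := by ring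
    rw [e2, gI_succ] at h2
    rw [e0, e1, sub_mul, ← h2, gR_succ (2 * n + 1), gR_succ (2 * n + c + 2)]
    push_cast
    linear_combination (2 * (n : ℝ) + c + 3) / 2 * h1

lemma sphere_odd (a b c : ℕ) (h : Odd (a + b)) : gT a b = 0 ∧ gS a b c = 0 := by
  have h1 := polar_two a b
  have h2 := (gF_int a b c).symm.trans (gF_sphere a b c)
  have hz : gI a * gI b = 0 := by
    rcases Nat.even_or_odd a with ha | ha
    · rw [gI_odd b (by grind), mul_zero]
    · rw [gI_odd a ha, zero_mul]
  rw [hz] at h1 h2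
  have p1 := (gR_pos (a + b + 1)).ne'
  have p2 := (gR_pos (a + b + c + 2)).ne'
  constructor
  · simpa [p1] using h1.symm
  · simpa [p2] using h2.symm

lemma sphere_even (a b c n : ℕ) (h : a + b = 2 * n) : gS a b c = gT a b * gB n c := by
  have h1 := polar_two a b
  have h2 := (gF_int a b c).symm.trans (gF_sphere a b c)
  have h3 := gB_rel n c
  rw [h] at h1 h2
  have p2 := (gR_pos (2 * n + c + 2)).ne'
  apply mul_right_cancel₀ p2
  rw [h1] at h2
  linear_combination (-1) * h2 + gT a b * h3

lemma cos_rule (m : ℕ) (hm : 1 ≤ m) (n : ℤ) (hn : |n| < 2 * m) (α : ℝ) :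
    ∑ k : Fin (2 * m), Real.pi / m * Real.cos (n * ((2 * (k : ℝ) + 1) * Real.pi / (2 * m)) + α) =
      ∫ θ in (-Real.pi)..Real.pi, Real.cos (n * θ + α) := by
  have hm0 : (m : ℝ) ≠ 0 := by positivity
  by_cases h0 : n = 0
  · subst h0
    simp
    field_simp
    ring
  · have hn0 : (n : ℝ) ≠ 0 := by exact_mod_cast h0
    have hI : ∫ θ in (-Real.pi)..Real.pi, Real.cos (n * θ + α) = 0 := by
      rw [intervalIntegral.integral_comp_mul_add _ hn0, integral_cos]
      have : Real.sin (n * Real.pi + α) = Real.sin (n * (-Real.pi) + α) := by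
        rw [← Real.sin_add_int_mul_two_pi (n * (-Real.pi) + α) n]
        congr 1; ring
      rw [this]; simp
    rw [hI, ← Finset.mul_sum]
    set h : ℝ := n * Real.pi / (2 * m) with hh
    have hs : Real.sin h ≠ 0 := by
      intro hs
      obtain ⟨j, hj⟩ := Real.sin_eq_zero_iff.1 hs
      have : (n : ℝ) = j * (2 * m) := by
        rw [hh] at hj
        field_simp at hj
        linarith
      have hz : n = j * (2 * m) := by exact_mod_cast this
      have hd : (2 * (m : ℤ)) ∣ n := ⟨j, by rw [hz]; ring⟩
      exact h0 (Int.eq_zero_of_abs_lt_dvd hd hn)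
    have hsum : ∑ k : Fin (2 * m),
        Real.cos (n * ((2 * (k : ℝ) + 1) * Real.pi / (2 * m)) + α) = 0 := by
      apply mul_left_cancel₀ (mul_ne_zero two_ne_zero hs)
      rw [mul_zero, Finset.mul_sum]
      rw [Fin.sum_univ_eq_sum_range (fun k : ℕ => 2 * Real.sin h *
        Real.cos (n * ((2 * (k : ℝ) + 1) * Real.pi / (2 * m)) + α)) (2 * m)]
      have e : ∀ k : ℕ, 2 * Real.sin h *
        Real.cos (n * ((2 * (k : ℝ) + 1) * Real.pi / (2 * m)) + α) =
          Real.sin (2 * ((k + 1 : ℕ) : ℝ) * h + α) - Real.sin (2 * (k : ℝ) * h + α) := by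
        intro k
        have e1 : n * ((2 * (k : ℝ) + 1) * Real.pi / (2 * m)) + α = (2 * (k : ℝ) * h + α) + h := by
          rw [hh]; ring
        have e2 : 2 * ((k + 1 : ℕ) : ℝ) * h + α = ((2 * (k : ℝ) * h + α) + h) + h := by
          push_cast; ring
        have e3 : Real.sin (2 * (k : ℝ) * h + α) = Real.sin (((2 * (k : ℝ) * h + α) + h) - h) := by
          congr 1; ring
        rw [e1, e2, e3, Real.sin_add _ h, Real.sin_sub]
        ring
      simp only [e]
      rw [Finset.sum_range_sub (fun k : ℕ => Real.sin (2 * (k : ℝ) * h + α))]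
      have : 2 * ((2 * m : ℕ) : ℝ) * h + α = α + n * (2 * Real.pi) := by
        rw [hh]; push_cast; field_simp; ring
      rw [this, Real.sin_add_int_mul_two_pi]; simp
    rw [hsum, mul_zero]

lemma trig_rule_aux (m : ℕ) (hm : 1 ≤ m) (b : ℕ) : ∀ (n : ℤ) (α : ℝ), |n| + b < 2 * m →
    ∑ k : Fin (2 * m), Real.pi / m * (Real.sin ((2 * (k : ℝ) + 1) * Real.pi / (2 * m)) ^ b *
      Real.cos (n * ((2 * (k : ℝ) + 1) * Real.pi / (2 * m)) + α)) =
      ∫ θ in (-Real.pi)..Real.pi, Real.sin θ ^ b * Real.cos (n * θ + α) := by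
  induction b with
  | zero => intro n α h; simpa using cos_rule m hm n (by simpa using h) α
  | succ b ih =>
    intro n α h
    have h1 := ih (n + 1) (α - Real.pi / 2) (by grind)
    have h2 := ih (n - 1) (α - Real.pi / 2) (by grind)
    have key : ∀ θ : ℝ, Real.sin θ ^ (b + 1) * Real.cos (n * θ + α) =
        1 / 2 * (Real.sin θ ^ b * Real.cos (((n + 1 : ℤ) : ℝ) * θ + (α - Real.pi / 2))) -
        1 / 2 * (Real.sin θ ^ b * Real.cos (((n - 1 : ℤ) : ℝ) * θ + (α - Real.pi / 2))) := by
      intro θ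
      have e1 : ((n + 1 : ℤ) : ℝ) * θ + (α - Real.pi / 2) = (n * θ + α) + θ - Real.pi / 2 := by
        push_cast; ring
      have e2 : ((n - 1 : ℤ) : ℝ) * θ + (α - Real.pi / 2) = (n * θ + α) - θ - Real.pi / 2 := by
        push_cast; ring
      rw [e1, e2, Real.cos_sub_pi_div_two, Real.cos_sub_pi_div_two, Real.sin_add _ θ, Real.sin_sub]
      ring
    simp only [key]
    rw [intervalIntegral.integral_sub, intervalIntegral.integral_const_mul,
      intervalIntegral.integral_const_mul, ← h1, ← h2, Finset.mul_sum, Finset.mul_sum,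
      ← Finset.sum_sub_distrib]
    · refine Finset.sum_congr rfl fun k _ => ?_
      ring
    · exact (by fun_prop : Continuous _).intervalIntegrable _ _
    · exact (by fun_prop : Continuous _).intervalIntegrable _ _

lemma trig_rule_aux2 (m : ℕ) (hm : 1 ≤ m) (a b : ℕ) : ∀ (n : ℤ) (α : ℝ), |n| + b + a < 2 * m →
    ∑ k : Fin (2 * m), Real.pi / m * (Real.cos ((2 * (k : ℝ) + 1) * Real.pi / (2 * m)) ^ a *
      (Real.sin ((2 * (k : ℝ) + 1) * Real.pi / (2 * m)) ^ b *
      Real.cos (n * ((2 * (k : ℝ) + 1) * Real.pi / (2 * m)) + α))) =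
      ∫ θ in (-Real.pi)..Real.pi, Real.cos θ ^ a * (Real.sin θ ^ b * Real.cos (n * θ + α)) := by
  induction a with
  | zero => intro n α h; simpa using trig_rule_aux m hm b n α (by simpa using h)
  | succ a ih =>
    intro n α h
    have h1 := ih (n + 1) α (by grind)
    have h2 := ih (n - 1) α (by grind)
    have key : ∀ θ : ℝ, Real.cos θ ^ (a + 1) * (Real.sin θ ^ b * Real.cos (n * θ + α)) =
        1 / 2 * (Real.cos θ ^ a * (Real.sin θ ^ b * Real.cos (((n + 1 : ℤ) : ℝ) * θ + α))) +
        1 / 2 * (Real.cos θ ^ a * (Real.sin θ ^ b * Real.cos (((n - 1 : ℤ) : ℝ) * θ + α))) := by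
      intro θ
      have e1 : ((n + 1 : ℤ) : ℝ) * θ + α = (n * θ + α) + θ := by
        push_cast; ring
      have e2 : ((n - 1 : ℤ) : ℝ) * θ + α = (n * θ + α) - θ := by
        push_cast; ring
      rw [e1, e2, Real.cos_add _ θ, Real.cos_sub]
      ring
    simp only [key]
    rw [intervalIntegral.integral_add, intervalIntegral.integral_const_mul,
      intervalIntegral.integral_const_mul, ← h1, ← h2, Finset.mul_sum, Finset.mul_sum,
      ← Finset.sum_add_distrib]
    · refine Finset.sum_congr rfl fun k _ => ?_
      ring
    · exact (by fun_prop : Continuous _).intervalIntegrable _ _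
    · exact (by fun_prop : Continuous _).intervalIntegrable _ _

lemma trig_rule (m : ℕ) (hm : 1 ≤ m) (a b : ℕ) (h : a + b < 2 * m) :
    ∑ k : Fin (2 * m), Real.pi / m * (Real.cos ((2 * (k : ℝ) + 1) * Real.pi / (2 * m)) ^ a *
      Real.sin ((2 * (k : ℝ) + 1) * Real.pi / (2 * m)) ^ b) = gT a b := by
  have := trig_rule_aux2 m hm a b 0 0 (by simp; omega)
  simpa [gT] using this

open Polynomial in
/-- The nodes of the rule lie in `[-1, 1]`. -/
lemma nodes_mem (m : ℕ) (hm : 1 ≤ m) (y A : Fin m → ℝ)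
    (hrule : ∀ q : Polynomial ℝ, q.natDegree ≤ 2 * m - 1 →
      ∑ j, A j * q.eval (y j) = ∫ t in (-1 : ℝ)..1, q.eval t) (j : Fin m) : y j ^ 2 ≤ 1 := by
  by_contra hlt
  push Not at hlt
  set w : Polynomial ℝ := ∏ i ∈ Finset.univ.erase j, (X - C (y i)) with hw
  have hwm : w.Monic := monic_prod_of_monic _ _ fun i _ => monic_X_sub_C _
  have hwd : w.natDegree = m - 1 := by
    rw [hw, natDegree_prod_of_monic _ _ fun i _ => monic_X_sub_C _]
    simp
  have hq := hrule ((X - C (y j)) * w ^ 2) (by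
    rw [(monic_X_sub_C _).natDegree_mul (hwm.pow 2), hwm.natDegree_pow, natDegree_X_sub_C, hwd]
    omega)
  have hz : ∑ i, A i * ((X - C (y j)) * w ^ 2).eval (y i) = 0 := by
    refine Finset.sum_eq_zero fun i _ => ?_
    by_cases hij : i = j
    · simp [hij]
    · have : w.eval (y i) = 0 := by
        rw [hw, eval_prod]
        exact Finset.prod_eq_zero (i := i) (by simp [hij]) (by simp)
      simp [this]
  rw [hz] at hq
  -- multiply by the sign
  have hpos : 0 < ∫ t in (-1 : ℝ)..1, y j * (y j - t) * (w.eval t) ^ 2 := by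
    have hyt : ∀ t ∈ Set.Icc (-1 : ℝ) 1, 0 < y j * (y j - t) := by
      intro t ht
      have : t ^ 2 ≤ 1 := by nlinarith [ht.1, ht.2]
      nlinarith [sq_nonneg (y j - t)]
    obtain ⟨t, ht, htw⟩ : ∃ t ∈ Set.Ioo (-1 : ℝ) 1, w.eval t ≠ 0 := by
      by_contra hcon
      push Not at hcon
      exact hwm.ne_zero (eq_zero_of_infinite_isRoot w
        ((Set.Ioo_infinite (by norm_num : (-1 : ℝ) < 1)).mono fun t ht => hcon t ht))
    refine intervalIntegral.integral_pos (by norm_num)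
      (by fun_prop : Continuous _).continuousOn ?_ ⟨t, Set.Ioo_subset_Icc_self ht, ?_⟩
    · intro s hs
      have := hyt s ⟨hs.1.le, hs.2⟩
      positivity
    · have := hyt t (Set.Ioo_subset_Icc_self ht)
      positivity
  have heq : ∫ t in (-1 : ℝ)..1, y j * (y j - t) * (w.eval t) ^ 2 =
      (- y j) * ∫ t in (-1 : ℝ)..1, ((X - C (y j)) * w ^ 2).eval t := by
    rw [← intervalIntegral.integral_const_mul]
    congr 1; funext t; simp; ring
  rw [heq, ← hq] at hpos
  simp at hpos

lemma monomial_rule (m : ℕ) (hm : 1 ≤ m) (y A : Fin m → ℝ)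
    (hrule : ∀ q : Polynomial ℝ, q.natDegree ≤ 2 * m - 1 →
      ∑ j, A j * q.eval (y j) = ∫ t in (-1 : ℝ)..1, q.eval t)
    (a b c : ℕ) (h : a + b + c ≤ 2 * m - 1) :
    ∑ j : Fin m, ∑ k : Fin (2 * m), Real.pi / m * A j *
      ((Real.sqrt (1 - y j ^ 2) * Real.cos ((2 * (k : ℝ) + 1) * Real.pi / (2 * m))) ^ a *
       (Real.sqrt (1 - y j ^ 2) * Real.sin ((2 * (k : ℝ) + 1) * Real.pi / (2 * m))) ^ b *
       y j ^ c) = gS a b c := by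
  have h1 : ∀ j : Fin m, ∑ k : Fin (2 * m), Real.pi / m * A j *
      ((Real.sqrt (1 - y j ^ 2) * Real.cos ((2 * (k : ℝ) + 1) * Real.pi / (2 * m))) ^ a *
       (Real.sqrt (1 - y j ^ 2) * Real.sin ((2 * (k : ℝ) + 1) * Real.pi / (2 * m))) ^ b *
       y j ^ c) = gT a b * (A j * (y j ^ c * Real.sqrt (1 - y j ^ 2) ^ (a + b))) := by
    intro j
    rw [← trig_rule m hm a b (by omega), Finset.sum_mul]
    refine Finset.sum_congr rfl fun k _ => ?_
    ring
  simp only [h1]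
  rw [← Finset.mul_sum]
  rcases Nat.even_or_odd (a + b) with he | ho
  · obtain ⟨n, hn⟩ := he
    have hn2 : a + b = 2 * n := by omega
    rw [sphere_even a b c n hn2]
    congr 1
    have hq := hrule (Polynomial.X ^ c * (1 - Polynomial.X ^ 2) ^ n) (by
      have : (1 - Polynomial.X ^ 2 : Polynomial ℝ).natDegree ≤ 2 := by compute_degree
      have h3 := Polynomial.natDegree_pow_le_of_le n this
      have h4 := Polynomial.natDegree_mul_le_of_le
        (Polynomial.natDegree_X_pow_le (R := ℝ) c) h3
      omega)
    simp only [Polynomial.eval_mul, Polynomial.eval_pow, Polynomial.eval_X, Polynomial.eval_sub,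
      Polynomial.eval_one] at hq
    rw [gB, ← hq]
    refine Finset.sum_congr rfl fun j _ => ?_
    rw [hn2, pow_mul, Real.sq_sqrt]
    linarith [nodes_mem m hm y A hrule j]
  · obtain ⟨hT, hS⟩ := sphere_odd a b c ho
    rw [hT, hS, zero_mul]

/-- Let `m ≥ 1` and let `{(y j, A j)}` be a quadrature rule on `[−1, 1]` exact
for all polynomials of degree at most `2m − 1`.  For `k = 1, …, 2m` set
`φ_k = (2k − 1)π/(2m)`, and consider the `2m²`-point product rule on `U₃` with points
`P_{j,k} = (√(1 − y_j²) cos φ_k, √(1 − y_j²) sin φ_k, y_j)` and weights `(π/m) A j`.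
This rule is a cubature rule of degree `2m − 1` for `U₃`. -/
theorem product_rule_sphere (m : ℕ) (hm : 1 ≤ m) (y A : Fin m → ℝ)
    (hrule : ∀ q : Polynomial ℝ, q.natDegree ≤ 2 * m - 1 →
      ∑ j, A j * q.eval (y j) = ∫ t in (-1 : ℝ)..1, q.eval t)
    (p : MvPolynomial (Fin 3) ℝ) (hp : p.totalDegree ≤ 2 * m - 1) :
    ∑ j : Fin m, ∑ k : Fin (2 * m),
        Real.pi / m * A j *
          MvPolynomial.eval
            ![Real.sqrt (1 - y j ^ 2) * Real.cos ((2 * (k : ℝ) + 1) * Real.pi / (2 * m)),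
              Real.sqrt (1 - y j ^ 2) * Real.sin ((2 * (k : ℝ) + 1) * Real.pi / (2 * m)),
              y j] p =
      ∫ v : Metric.sphere (0 : EuclideanSpace ℝ (Fin 3)) 1,
          MvPolynomial.eval (fun i => (v : EuclideanSpace ℝ (Fin 3)) i) p
        ∂((volume : Measure (EuclideanSpace ℝ (Fin 3))).toSphere) := by

  simp only [MvPolynomial.eval_eq', Fin.prod_univ_three]
  rw [integral_finsetSum]
  · simp only [Finset.mul_sum]
    rw [Finset.sum_congr rfl fun j _ => Finset.sum_comm, Finset.sum_comm]
    refine Finset.sum_congr rfl fun d hd => ?_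
    have hdeg : d 0 + d 1 + d 2 ≤ 2 * m - 1 := by
      have := (MvPolynomial.le_totalDegree hd).trans hp
      rwa [Finsupp.sum_fintype _ _ (fun _ => rfl), Fin.sum_univ_three] at this
    rw [integral_const_mul]
    have := monomial_rule m hm y A hrule (d 0) (d 1) (d 2) hdeg
    rw [gS] at this
    rw [← this, Finset.mul_sum]
    refine Finset.sum_congr rfl fun j _ => ?_
    rw [Finset.mul_sum]
    refine Finset.sum_congr rfl fun k _ => ?_
    simp
    ring
  · intro d _
    exact (by fun_prop : Continuous _).integrable_of_hasCompactSupport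
      (HasCompactSupport.of_compactSpace _)
end

section
/- For every m ≥ 1, the m-point Gauß–Chebyshev rule of the first kind, with points y_i = cos((2i − 1)π/(2m)) and constant weights A_i = π/m for i = 1, …, m, is exact of degree 2m − 1 for the weight (1 − y²)^{−1/2} on [−1, 1]: for every polynomial f of degree at most 2m − 1, ∫_{−1}^1 f(y) (1 − y²)^{−1/2} dy = (π/m) Σ_{i=1}^m f( cos((2i − 1)π/(2m)) ). -/
/-- For every `m ≥ 1`, the `m`-point Gauß–Chebyshev rule of the first kind,
with points `y_i = cos((2i − 1)π/(2m))` and constant weights `π/m`, is exact of degree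
`2m − 1` for the weight `(1 − y²)^{−1/2}` on `[−1, 1]`: for every polynomial `f` of degree
at most `2m − 1`,
`∫_{−1}^1 f(y) (1 − y²)^{−1/2} dy = (π/m) Σ_{i=1}^m f(cos((2i − 1)π/(2m)))`. -/
theorem gauss_chebyshev_rule (m : ℕ) (hm : 1 ≤ m) (f : Polynomial ℝ)
    (hf : f.natDegree ≤ 2 * m - 1) :
    ∫ y in (-1 : ℝ)..1, f.eval y * (1 - y ^ 2) ^ (-(1 : ℝ) / 2) =
      Real.pi / m * ∑ i : Fin m, f.eval (Real.cos ((2 * (i : ℝ) + 1) * Real.pi / (2 * m))) := by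
  have hdeg : f.degree < 2 * (m : WithBot ℕ) := by
    refine lt_of_le_of_lt Polynomial.degree_le_natDegree ?_
    have h : f.natDegree < 2 * m := by omega
    exact_mod_cast h
  have key := Polynomial.Chebyshev.integral_eq_sumZeroes (n := m) (P := f) (by omega) hdeg
  rw [Polynomial.Chebyshev.integral_measureT, Polynomial.Chebyshev.sumZeroes] at key
  rw [Fin.sum_univ_eq_sum_range
    (fun i : ℕ => f.eval (Real.cos ((2 * (i : ℝ) + 1) * Real.pi / (2 * m)))) m]
  have hsum : ∀ i : ℕ, (2 * (i : ℝ) + 1) * Real.pi / (2 * m)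
      = (2 * (i : ℝ) + 1) / (2 * m) * Real.pi := fun i => by ring
  simp_rw [hsum]
  rw [← key]
  refine intervalIntegral.integral_congr fun x hx => ?_
  rw [Set.uIcc_of_le (by norm_num)] at hx
  have h0 : 0 ≤ 1 - x ^ 2 := by nlinarith [hx.1, hx.2]
  have hw : (1 - x ^ 2) ^ (-(1 : ℝ) / 2) = √((1 - x ^ 2)⁻¹) := by
    rw [Real.sqrt_inv, Real.sqrt_eq_rpow, ← Real.rpow_neg h0]
    norm_num
  simp only [hw]
end
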